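/- arXiv:math/0601423 — 3 statements merged into one kernel-verified Lean document; each statement's English description precedes it below -/
import Mathlib

section
/- Let M be a finitely generated R-module and let φ : M → M be an R-linear endomorphism with φ^m = 0 for some m ≥ 1. Suppose M₁ →^α M₀ →^p M → 0 is a free presentation of M over R (M₀ and M₁ finite free R-modules, p surjective, and the image of α equals the kernel of p), and let φ₀ : M₀ → M₀ be an R-linear lifting of φ, i.e. p ∘ φ₀ = φ ∘ p. Let F = ^S M be the S-module obtained from (M, φ). Then the S-linear map π : M₀ ⊗_R S → F determined by v ⊗ 1 ↦ p(v) is surjective, and its kernel equals the image of the S-linear map (M₁ ⊗_R S) ⊕ (M₀ ⊗_R S) → M₀ ⊗_R S whose components are the base change α ⊗ 1 of α and the map (φ₀ ⊗ 1) − x_n·id. Consequently F has the presentation (M₁ ⊗_R S) ⊕ (M₀ ⊗_R S) → M₀ ⊗_R S → F → 0. -/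
open TensorProduct

open Polynomial in
theorem aux_pres {R M M₀ M₁ : Type*} [CommRing R] [AddCommGroup M] [Module R M]
    [AddCommGroup M₀] [Module R M₀] [AddCommGroup M₁] [Module R M₁]
    (φ : M →ₗ[R] M) (α : M₁ →ₗ[R] M₀) (p : M₀ →ₗ[R] M)
    (hp : Function.Surjective p)
    (hexact : LinearMap.range α = LinearMap.ker p)
    (φ₀ : M₀ →ₗ[R] M₀)
    (hlift : p ∘ₗ φ₀ = φ ∘ₗ p)
    (π : (R[X] ⊗[R] M₀) →ₗ[R[X]] Module.AEval' φ)
    (hπ : ∀ v : M₀, π (1 ⊗ₜ[R] v) = Module.AEval'.of φ (p v))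
    (β : ((R[X] ⊗[R] M₁) × (R[X] ⊗[R] M₀)) →ₗ[R[X]] (R[X] ⊗[R] M₀))
    (hβ₁ : ∀ w : R[X] ⊗[R] M₁, β (w, 0) = LinearMap.baseChange R[X] α w)
    (hβ₂ : ∀ u : R[X] ⊗[R] M₀, β (0, u) = LinearMap.baseChange R[X] φ₀ u - (X : R[X]) • u) :
    Function.Surjective π ∧ LinearMap.ker π = LinearMap.range β := by
  have hsm : ∀ (f : R[X]) (v : M₀),
      f ⊗ₜ[R] v = f • ((1 : R[X]) ⊗ₜ[R] v) := by
    intro f v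
    rw [TensorProduct.smul_tmul', smul_eq_mul, mul_one]
  have hC : ∀ (a : R) (v : M₀), (C a : R[X]) • ((1 : R[X]) ⊗ₜ[R] v) = 1 ⊗ₜ[R] (a • v) := by
    intro a v
    rw [TensorProduct.smul_tmul', ← TensorProduct.smul_tmul, smul_eq_mul, mul_one,
      Polynomial.smul_eq_C_mul, mul_one]
  have hX : ∀ v : M₀, (X : R[X]) • ((1 : R[X]) ⊗ₜ[R] v) - 1 ⊗ₜ[R] (φ₀ v) ∈ LinearMap.range β := by
    intro v
    refine ⟨-(0, 1 ⊗ₜ v), ?_⟩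
    rw [map_neg, hβ₂, LinearMap.baseChange_tmul]
    abel
  have key : ∀ u : R[X] ⊗[R] M₀, ∃ v : M₀, u - 1 ⊗ₜ[R] v ∈ LinearMap.range β := by
    intro u
    induction u with
    | zero => exact ⟨0, by simp⟩
    | add x y hx hy =>
      obtain ⟨v, hv⟩ := hx
      obtain ⟨w, hw⟩ := hy
      refine ⟨v + w, ?_⟩
      rw [TensorProduct.tmul_add, add_sub_add_comm]
      exact add_mem hv hw
    | tmul f v =>
      induction f using Polynomial.induction_on' with
      | add f g hf hg =>
        obtain ⟨v', hv⟩ := hf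
        obtain ⟨w, hw⟩ := hg
        refine ⟨v' + w, ?_⟩
        rw [TensorProduct.tmul_add, TensorProduct.add_tmul, add_sub_add_comm]
        exact add_mem hv hw
      | monomial k a =>
        induction k with
        | zero =>
          refine ⟨a • v, ?_⟩
          rw [hsm, monomial_zero_left, hC, sub_self]
          exact zero_mem _
        | succ k ih =>
          obtain ⟨w, hw⟩ := ih
          refine ⟨φ₀ w, ?_⟩
          have h1 := add_mem (Submodule.smul_mem _ (X : R[X]) hw) (hX w)
          rw [smul_sub, sub_add_sub_cancel, TensorProduct.smul_tmul', smul_eq_mul,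
            X_mul_monomial] at h1
          exact h1
  have hle : LinearMap.range β ≤ LinearMap.ker π := by
    rintro _ ⟨⟨w, u⟩, rfl⟩
    have hs : ((w, u) : (R[X] ⊗[R] M₁) × (R[X] ⊗[R] M₀)) = (w, 0) + (0, u) := by simp
    rw [hs, map_add, hβ₁, hβ₂]
    clear hs
    refine add_mem ?_ ?_
    · induction w with
      | zero => simp
      | add x y hx hy =>
        rw [map_add]
        exact add_mem hx hy
      | tmul f v =>
        have h0 : p (α v) = 0 := by
          have : α v ∈ LinearMap.ker p := hexact ▸ LinearMap.mem_range_self α v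
          exact this
        rw [LinearMap.mem_ker, LinearMap.baseChange_tmul, hsm, map_smul, hπ, h0, map_zero,
          smul_zero]
    · induction u with
      | zero => simp
      | add x y hx hy =>
        rw [map_add, smul_add, add_sub_add_comm]
        exact add_mem hx hy
      | tmul f v =>
        have h0 : p (φ₀ v) = φ (p v) := LinearMap.congr_fun hlift v
        rw [LinearMap.mem_ker, LinearMap.baseChange_tmul, hsm f (φ₀ v), hsm f v, map_sub,
          smul_comm X f, map_smul, map_smul, map_smul, hπ, hπ, h0, Module.AEval'.X_smul_of,
          sub_self]
  refine ⟨fun y => ?_, le_antisymm ?_ hle⟩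
  · obtain ⟨z, rfl⟩ := (Module.AEval'.of φ).surjective y
    obtain ⟨v, rfl⟩ := hp z
    exact ⟨_, hπ v⟩
  · intro u hu
    obtain ⟨v, hv⟩ := key u
    have h1 := hle hv
    rw [LinearMap.mem_ker] at hu h1
    rw [map_sub, hu, hπ, zero_sub, neg_eq_zero, LinearEquiv.map_eq_zero_iff] at h1
    have h2 : v ∈ LinearMap.range α := hexact ▸ h1
    obtain ⟨w, rfl⟩ := h2
    have h3 : (1 : R[X]) ⊗ₜ[R] (α w) ∈ LinearMap.range β :=
      ⟨(1 ⊗ₜ w, 0), by rw [hβ₁, LinearMap.baseChange_tmul]⟩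
    simpa using add_mem hv h3

/-- Proposition 2.4 of the paper.
Let `K` be a field, `n ≥ 1`, `R = K[x_0,…,x_{n-1}]` and `S = R[x_n]`.
Let `M` be a finitely generated `R`-module, `φ : M → M` `R`-linear with `φ^m = 0`,
`M₁ →α M₀ →p M → 0` a free presentation of `M` by finite free `R`-modules, and
`φ₀ : M₀ → M₀` a lifting of `φ` (i.e. `p ∘ φ₀ = φ ∘ p`).  Let `F = ^S M` be the
`S`-module obtained from `(M, φ)` (Mathlib's `Module.AEval' φ`).  Then the `S`-linear map
`π : S ⊗_R M₀ → F` determined by `v ⊗ 1 ↦ p v` is surjective and its kernel is the image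
of the `S`-linear map `β : (S ⊗_R M₁) ⊕ (S ⊗_R M₀) → S ⊗_R M₀` whose components are the
base change `α ⊗ 1` of `α` and the map `(φ₀ ⊗ 1) - x_n • id`.  Consequently `F` has the
presentation `(S ⊗_R M₁) ⊕ (S ⊗_R M₀) → S ⊗_R M₀ → F → 0`. -/
theorem statement2 (K : Type*) [Field K] (n : ℕ) (hn : 1 ≤ n)
    (M : Type*) [AddCommGroup M] [Module (MvPolynomial (Fin n) K) M]
    [Module.Finite (MvPolynomial (Fin n) K) M]
    (m : ℕ) (hm : 1 ≤ m)
    (φ : M →ₗ[MvPolynomial (Fin n) K] M) (hφ : φ ^ m = 0)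
    (M₀ M₁ : Type*) [AddCommGroup M₀] [Module (MvPolynomial (Fin n) K) M₀]
    [Module.Finite (MvPolynomial (Fin n) K) M₀] [Module.Free (MvPolynomial (Fin n) K) M₀]
    [AddCommGroup M₁] [Module (MvPolynomial (Fin n) K) M₁]
    [Module.Finite (MvPolynomial (Fin n) K) M₁] [Module.Free (MvPolynomial (Fin n) K) M₁]
    (α : M₁ →ₗ[MvPolynomial (Fin n) K] M₀)
    (p : M₀ →ₗ[MvPolynomial (Fin n) K] M)
    (hp : Function.Surjective p)
    (hexact : LinearMap.range α = LinearMap.ker p)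
    (φ₀ : M₀ →ₗ[MvPolynomial (Fin n) K] M₀)
    (hlift : p ∘ₗ φ₀ = φ ∘ₗ p)
    (π : (Polynomial (MvPolynomial (Fin n) K) ⊗[MvPolynomial (Fin n) K] M₀)
      →ₗ[Polynomial (MvPolynomial (Fin n) K)] Module.AEval' φ)
    (hπ : ∀ v : M₀, π (1 ⊗ₜ[MvPolynomial (Fin n) K] v) = Module.AEval'.of φ (p v))
    (β : ((Polynomial (MvPolynomial (Fin n) K) ⊗[MvPolynomial (Fin n) K] M₁) ×
        (Polynomial (MvPolynomial (Fin n) K) ⊗[MvPolynomial (Fin n) K] M₀))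
      →ₗ[Polynomial (MvPolynomial (Fin n) K)]
        (Polynomial (MvPolynomial (Fin n) K) ⊗[MvPolynomial (Fin n) K] M₀))
    (hβ₁ : ∀ w : Polynomial (MvPolynomial (Fin n) K) ⊗[MvPolynomial (Fin n) K] M₁,
      β (w, 0) = LinearMap.baseChange (Polynomial (MvPolynomial (Fin n) K)) α w)
    (hβ₂ : ∀ u : Polynomial (MvPolynomial (Fin n) K) ⊗[MvPolynomial (Fin n) K] M₀,
      β (0, u) = LinearMap.baseChange (Polynomial (MvPolynomial (Fin n) K)) φ₀ u -
        (Polynomial.X : Polynomial (MvPolynomial (Fin n) K)) • u) :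
    Function.Surjective π ∧ LinearMap.ker π = LinearMap.range β := by
  exact aux_pres φ α p hp hexact φ₀ hlift π hπ β hβ₁ hβ₂
end

section
/- Let F be a finitely generated S-module annihilated by x_n^m for some m ≥ 1. Then the following are equivalent: (i) F admits a finite free resolution of length one over S, i.e. there exist finite free S-modules F₁, F₀ and an exact sequence 0 → F₁ → F₀ → F → 0; (ii) ₍R₎F is a projective R-module. -/
section
open Polynomial TensorProduct

theorem aux_finite {R F : Type*} [CommRing R] [AddCommGroup F] [Module R[X] F] [Module R F]
    [IsScalarTower R R[X] F] [Module.Finite R[X] F] (m : ℕ)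
    (hann : ∀ x : F, ((X : R[X]) ^ m) • x = 0) : Module.Finite R F := by
  have ht : Module.IsTorsionBySet R[X] F (Ideal.span {(X : R[X]) ^ m}) := by
    rw [← Module.isTorsionBySet_iff_is_torsion_by_span, Module.isTorsionBySet_singleton_iff]
    exact hann
  let : Module (R[X] ⧸ Ideal.span {(X : R[X]) ^ m}) F := ht.module
  have : IsScalarTower R[X] (R[X] ⧸ Ideal.span {(X : R[X]) ^ m}) F := ht.isScalarTower
  have : IsScalarTower R (R[X] ⧸ Ideal.span {(X : R[X]) ^ m}) F := by
    refine ⟨fun r y x => ?_⟩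
    obtain ⟨y, rfl⟩ := Ideal.Quotient.mk_surjective y
    exact smul_assoc r y x
  have : Module.Finite (R[X] ⧸ Ideal.span {(X : R[X]) ^ m}) F :=
    Module.Finite.of_restrictScalars_finite R[X] _ F
  have : Module.Finite R (R[X] ⧸ Ideal.span {(X : R[X]) ^ m}) :=
    (monic_X_pow m).finite_quotient
  exact Module.Finite.trans (R[X] ⧸ Ideal.span {(X : R[X]) ^ m}) F

theorem aux_div (R : Type*) [CommRing R] (m : ℕ) :
    ∃ d : R[X] →ₗ[R] R[X], ∀ y, d (X ^ m * y) = y := by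
  have h1 : ∃ d : R[X] →ₗ[R] R[X], ∀ y, d (X * y) = y := by
    refine ⟨{ toFun := divX, map_add' := fun _ _ => divX_add, map_smul' := ?_ }, fun y => ?_⟩
    · intro r p
      rw [smul_eq_C_mul, divX_C_mul, RingHom.id_apply, smul_eq_C_mul]
    · change divX (X * y) = y
      ext j
      rw [coeff_divX, coeff_X_mul]
  obtain ⟨d, hd⟩ := h1
  induction m with
  | zero => exact ⟨LinearMap.id, fun y => by simp⟩
  | succ k ih =>
    obtain ⟨c, hc⟩ := ih
    refine ⟨c ∘ₗ d, fun y => ?_⟩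
    rw [LinearMap.comp_apply, pow_succ', mul_assoc, hd, hc]

theorem aux_mp {R F : Type*} [CommRing R] [AddCommGroup F] [Module R[X] F] [Module R F]
    [IsScalarTower R R[X] F] (m : ℕ)
    (hann : ∀ x : F, ((X : R[X]) ^ m) • x = 0) (k l : ℕ)
    (i : (Fin k → R[X]) →ₗ[R[X]] (Fin l → R[X])) (q : (Fin l → R[X]) →ₗ[R[X]] F)
    (hi : Function.Injective i) (hq : Function.Surjective q)
    (h : LinearMap.range i = LinearMap.ker q) : Module.Projective R F := by
  obtain ⟨d, hd⟩ := aux_div R m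
  have hmem : ∀ v : Fin l → R[X], ((X : R[X]) ^ m) • v ∈ LinearMap.range i := by
    intro v
    rw [h, LinearMap.mem_ker, map_smul, hann]
  let ψ : (Fin l → R[X]) →ₗ[R[X]] (Fin k → R[X]) :=
    (LinearEquiv.ofInjective i hi).symm.toLinearMap ∘ₗ
      (LinearMap.codRestrict (LinearMap.range i) (((X : R[X]) ^ m) • LinearMap.id) hmem)
  have hiψ : ∀ v, i (ψ v) = ((X : R[X]) ^ m) • v := by
    intro v
    have := LinearEquiv.ofInjective_symm_apply (h := hi) (f := i) ⟨_, hmem v⟩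
    exact this
  have hψi : ∀ y, ψ (i y) = ((X : R[X]) ^ m) • y := fun y => hi (by rw [hiψ, map_smul])
  let r : (Fin l → R[X]) →ₗ[R] (Fin k → R[X]) :=
    (LinearMap.pi fun j => d ∘ₗ LinearMap.proj j) ∘ₗ ψ.restrictScalars R
  have hr : ∀ y, r (i y) = y := by
    intro y
    funext j
    change d (ψ (i y) j) = y j
    rw [hψi]
    exact hd _
  -- section
  let g : (Fin l → R[X]) →ₗ[R] (Fin l → R[X]) :=
    LinearMap.id - i.restrictScalars R ∘ₗ r
  have hg : ∀ v, q v = 0 → g v = 0 := by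
    intro v hv
    have : v ∈ LinearMap.range i := by rw [h]; exact hv
    obtain ⟨y, rfl⟩ := this
    change i y - i (r (i y)) = 0
    rw [hr, sub_self]
  have hqi : ∀ y, q (i y) = 0 := fun y => by
    have : i y ∈ LinearMap.ker q := h ▸ LinearMap.mem_range_self i y
    exact this
  have hqg : ∀ v, q (g v) = q v := by
    intro v
    change q (v - i (r v)) = q v
    rw [map_sub, hqi, sub_zero]
  let q' : (Fin l → R[X]) →ₗ[R] F := q.restrictScalars R
  let t : F →ₗ[R] (Fin l → R[X]) :=
    (LinearMap.ker q').liftQ g (fun v hv => hg v hv) ∘ₗ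
      (q'.quotKerEquivOfSurjective hq).symm.toLinearMap
  refine Module.Projective.of_split t q' ?_
  ext x
  obtain ⟨v, rfl⟩ := hq x
  have : (q'.quotKerEquivOfSurjective hq).symm (q v) = Submodule.Quotient.mk v := by
    rw [LinearEquiv.symm_apply_eq]; rfl
  change q ((LinearMap.ker q').liftQ g (fun v hv => hg v hv) ((q'.quotKerEquivOfSurjective hq).symm (q v))) = q v
  rw [this]
  exact hqg v

theorem aux_mpr {R F : Type*} [CommRing R] [AddCommGroup F] [Module R[X] F] [Module R F]
    [IsScalarTower R R[X] F] (m : ℕ) [Module.Finite R F] [Module.Projective R F]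
    (hann : ∀ x : F, ((X : R[X]) ^ m) • x = 0) :
    ∃ (k l : ℕ) (i : (Fin k → R[X]) →ₗ[R[X]] (Fin l → R[X])) (q : (Fin l → R[X]) →ₗ[R[X]] F),
      Function.Injective i ∧ Function.Surjective q ∧ LinearMap.range i = LinearMap.ker q := by
  obtain ⟨b, p, s, -, hp, hps⟩ := Module.Finite.exists_comp_eq_id_of_projective R F
  have hps' : ∀ x, p (s x) = x := fun x => LinearMap.congr_fun hps x
  let x₀ : F →ₗ[R] F := (LinearMap.lsmul R[X] F X).restrictScalars R
  let e : (Fin b → R) →ₗ[R] (Fin b → R) := s ∘ₗ p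
  let T : (Fin b → R) →ₗ[R] (Fin b → R) := s ∘ₗ x₀ ∘ₗ p
  let E : (R[X] ⊗[R] (Fin b → R)) →ₗ[R[X]] (R[X] ⊗[R] (Fin b → R)) := e.baseChange R[X]
  let N : (R[X] ⊗[R] (Fin b → R)) →ₗ[R[X]] (R[X] ⊗[R] (Fin b → R)) := T.baseChange R[X]
  let φ : (R[X] ⊗[R] (Fin b → R)) →ₗ[R[X]] (R[X] ⊗[R] (Fin b → R)) := (X : R[X]) • E - N + (LinearMap.id - E)
  let q : (R[X] ⊗[R] (Fin b → R)) →ₗ[R[X]] F :=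
    TensorProduct.AlgebraTensorModule.lift ((LinearMap.lsmul R[X] F).flip.restrictScalars R ∘ₗ p).flip
  have hq1 : ∀ a v, q (a ⊗ₜ v) = a • p v := fun a v => rfl
  have hE1 : ∀ a v, E (a ⊗ₜ v) = a ⊗ₜ s (p v) := fun a v => rfl
  have hN1 : ∀ a v, N (a ⊗ₜ v) = a ⊗ₜ s ((X : R[X]) • p v) := fun a v => rfl
  have hEE : ∀ v, E (E v) = E v := by
    intro v
    induction v with
    | zero => simp
    | tmul a v => simp only [hE1, hps']
    | add x y hx hy => simp only [map_add, hx, hy]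
  have hEN : ∀ v, E (N v) = N v := by
    intro v
    induction v with
    | zero => simp
    | tmul a v => simp only [hE1, hN1, hps']
    | add x y hx hy => simp only [map_add, hx, hy]
  have hNE : ∀ v, N (E v) = N v := by
    intro v
    induction v with
    | zero => simp
    | tmul a v => simp only [hE1, hN1, hps']
    | add x y hx hy => simp only [map_add, hx, hy]
  have hφ : ∀ v, φ v = (X : R[X]) • E v - N v + (v - E v) := fun v => rfl
  have hqE : ∀ v, q (E v) = q v := by
    intro v
    induction v with
    | zero => simp
    | tmul a v => simp only [hE1, hq1, hps']
    | add x y hx hy => simp only [map_add, hx, hy]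
  have hqN : ∀ v, q (N v) = (X : R[X]) • q v := by
    intro v
    induction v with
    | zero => simp
    | tmul a v => simp only [hN1, hq1, hps', smul_smul, mul_comm]
    | add x y hx hy => simp only [map_add, hx, hy, smul_add]
  have hqφ : ∀ v, q (φ v) = 0 := by
    intro v
    rw [hφ, map_add, map_sub, map_sub, map_smul, hqE, hqN]; simp
  have hNk : ∀ (k : ℕ) (a : R[X]) v, (N ^ k) (E (a ⊗ₜ v)) = a ⊗ₜ s ((X : R[X]) ^ k • p v) := by
    intro k a v
    induction k with
    | zero => simp [hE1]
    | succ k ih => rw [pow_succ', Module.End.mul_apply, ih, hN1, hps', smul_smul, pow_succ']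
  have hNm : ∀ v, (N ^ m) (E v) = 0 := by
    intro v
    induction v with
    | zero => simp
    | tmul a v => rw [hNk, hann, map_zero, tmul_zero]
    | add x y hx hy => simp only [map_add, hx, hy, add_zero]
  let B : Module.Basis (Fin b) R[X] (R[X] ⊗[R] (Fin b → R)) := (Pi.basisFun R (Fin b)).baseChange R[X]
  let ε : (R[X] ⊗[R] (Fin b → R)) ≃ₗ[R[X]] (Fin b → R[X]) := B.equivFun
  have htf : ∀ v : (R[X] ⊗[R] (Fin b → R)), (X : R[X]) ^ m • v = 0 → v = 0 := by
    intro v hv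
    apply ε.injective
    have h2 : (X : R[X]) ^ m • ε v = 0 := by rw [← map_smul, hv, map_zero]
    rw [map_zero]
    funext j
    have h3 : (X : R[X]) ^ m * ε v j = 0 := congrFun h2 j
    obtain ⟨d, hd⟩ := aux_div R m
    rw [Pi.zero_apply, ← hd (ε v j), h3, map_zero]
  have hinj : Function.Injective φ := by
    rw [injective_iff_map_eq_zero]
    intro v hv
    have h1 : E v = v := by
      have h2 : φ v - E (φ v) = v - E v := by
        rw [hφ, map_add, map_sub, map_sub, map_smul, hEE, hEN]; abel
      rw [hv, map_zero, sub_zero] at h2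
      exact (sub_eq_zero.mp h2.symm).symm
    have h3 : N v = (X : R[X]) • v := by
      rw [hφ, h1, sub_self, add_zero] at hv
      exact (sub_eq_zero.mp hv).symm
    have h4 : ∀ k : ℕ, (N ^ k) v = (X : R[X]) ^ k • v := by
      intro k
      induction k with
      | zero => simp
      | succ k ih => rw [pow_succ', Module.End.mul_apply, ih, map_smul, h3, smul_smul, pow_succ]
    apply htf
    rw [← h4, ← h1, hNm]
  have hcE : ∀ v, v - E v ∈ LinearMap.range φ := by
    intro v
    refine ⟨v - E v, ?_⟩
    rw [hφ, map_sub, map_sub, hEE, hNE]; simp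
  have hcN : ∀ v, (X : R[X]) • v - N v ∈ LinearMap.range φ := by
    intro v
    have h1 : φ (E v) = (X : R[X]) • E v - N v := by
      rw [hφ, hEE, hNE]; simp
    have h2 : (X : R[X]) • v - N v = (X : R[X]) • (v - E v) + φ (E v) := by
      rw [h1, smul_sub]; abel
    rw [h2]
    exact Submodule.add_mem _ (Submodule.smul_mem _ _ (hcE v)) (LinearMap.mem_range_self φ _)
  have hmono : ∀ (k : ℕ) (v : Fin b → R), (((X : R[X]) ^ k) ⊗ₜ[R] v : (R[X] ⊗[R] (Fin b → R))) -
      (1 : R[X]) ⊗ₜ[R] s ((X : R[X]) ^ k • p v) ∈ LinearMap.range φ := by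
    intro k
    induction k with
    | zero =>
      intro v
      have := hcE ((1 : R[X]) ⊗ₜ[R] v)
      rw [hE1] at this
      simpa using this
    | succ k ih =>
      intro v
      have h1 := ih (s ((X : R[X]) • p v))
      have h2 := hcN (((X : R[X]) ^ k) ⊗ₜ[R] v)
      rw [hN1, smul_tmul', smul_eq_mul, ← pow_succ'] at h2
      rw [hps', smul_smul, ← pow_succ] at h1
      have h3 := Submodule.add_mem _ h2 h1
      rwa [sub_add_sub_cancel] at h3
  have hred : ∀ v : (R[X] ⊗[R] (Fin b → R)), v - (1 : R[X]) ⊗ₜ[R] s (q v) ∈ LinearMap.range φ := by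
    intro v
    induction v with
    | zero => simp
    | add x y hx hy =>
      have h3 := Submodule.add_mem _ hx hy
      rw [map_add, map_add, tmul_add]
      rwa [sub_add_sub_comm] at h3
    | tmul a v =>
      induction a using Polynomial.induction_on' with
      | add f g hf hg =>
        have h3 := Submodule.add_mem _ hf hg
        rw [add_tmul, map_add, map_add, tmul_add]
        rwa [sub_add_sub_comm] at h3
      | monomial k r =>
        have h1 := hmono k (r • v)
        rw [← smul_X_eq_monomial, smul_tmul, hq1]
        exact h1
  refine ⟨b, b, ε.toLinearMap ∘ₗ φ ∘ₗ ε.symm.toLinearMap, q ∘ₗ ε.symm.toLinearMap, ?_, ?_, ?_⟩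
  · exact ε.injective.comp (hinj.comp ε.symm.injective)
  · have hqs : Function.Surjective q := fun x => ⟨(1 : R[X]) ⊗ₜ s x, by rw [hq1, hps', one_smul]⟩
    exact hqs.comp ε.symm.surjective
  · ext w
    constructor
    · rintro ⟨y, rfl⟩
      rw [LinearMap.mem_ker]
      simp only [LinearMap.comp_apply, LinearEquiv.coe_coe, ε.symm_apply_apply, hqφ]
    · intro hw
      have hw' : q (ε.symm w) = 0 := hw
      have h1 := hred (ε.symm w)
      rw [hw', map_zero, tmul_zero, sub_zero] at h1
      obtain ⟨y, hy⟩ := h1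
      refine ⟨ε y, ?_⟩
      change ε (φ (ε.symm (ε y))) = w
      rw [ε.symm_apply_apply, hy, ε.apply_symm_apply]

end

/-- item (1) of Section 2.1 of the paper, via Auslander–Buchsbaum and
Quillen–Suslin.  Let `K` be a field, `n ≥ 1`, `R = K[x_0,…,x_{n-1}]` and `S = R[x_n]`.
Let `F` be a finitely generated `S`-module annihilated by `x_n^m` for some `m ≥ 1`.
Then `F` admits a finite free resolution of length one over `S`
(an exact sequence `0 → F₁ → F₀ → F → 0` with `F₁`, `F₀` finite free `S`-modules)
if and only if `F`, viewed as an `R`-module by restriction of scalars, is projective. -/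
theorem statement4 (K : Type*) [Field K] (n : ℕ) (hn : 1 ≤ n)
    (F : Type*) [AddCommGroup F]
    [Module (Polynomial (MvPolynomial (Fin n) K)) F]
    [Module (MvPolynomial (Fin n) K) F]
    [IsScalarTower (MvPolynomial (Fin n) K) (Polynomial (MvPolynomial (Fin n) K)) F]
    [Module.Finite (Polynomial (MvPolynomial (Fin n) K)) F]
    (m : ℕ) (hm : 1 ≤ m)
    (hann : ∀ x : F, ((Polynomial.X : Polynomial (MvPolynomial (Fin n) K)) ^ m) • x = 0) :
    (∃ (k l : ℕ)
        (i : (Fin k → Polynomial (MvPolynomial (Fin n) K))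
          →ₗ[Polynomial (MvPolynomial (Fin n) K)] (Fin l → Polynomial (MvPolynomial (Fin n) K)))
        (q : (Fin l → Polynomial (MvPolynomial (Fin n) K))
          →ₗ[Polynomial (MvPolynomial (Fin n) K)] F),
          Function.Injective i ∧ Function.Surjective q ∧
            LinearMap.range i = LinearMap.ker q) ↔
      Module.Projective (MvPolynomial (Fin n) K) F := by
  constructor
  · rintro ⟨k, l, i, q, hi, hq, h⟩
    exact aux_mp m hann k l i q hi hq h
  · intro hP
    have := aux_finite m hann
    exact aux_mpr m hann
end

section
/- Let M be a finitely generated projective R-module, let φ : M → M be an R-linear endomorphism with φ^m = 0 for some m ≥ 1, and let ψ : R^r → M be an R-linear map such that M = φ(M) + ψ(R^r). Let F = ^S M be the S-module obtained from (M, φ), and let Ψ : S^r → F be the S-linear map determined by sending the i-th standard basis vector to ψ(e_i). Then Ψ is surjective, and E := ker Ψ is a finitely generated projective S-module; in particular there is an exact sequence of S-modules 0 → E → S^r → F → 0 in which F is annihilated by x_n^m. -/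
open Polynomial TensorProduct in
theorem aux_char_seq {R : Type*} [CommRing R] [IsDomain R] {M : Type*} [AddCommGroup M] [Module R M]
    [Module.Projective R M] (m : ℕ) (φ : M →ₗ[R] M) (hφ : φ ^ m = 0) :
    ∃ (ev : R[X] ⊗[R] M →ₗ[R[X]] Module.AEval' φ) (ι : R[X] ⊗[R] M →ₗ[R[X]] R[X] ⊗[R] M),
      Function.Surjective ev ∧ Function.Injective ι ∧ LinearMap.ker ev = LinearMap.range ι := by
  let ev : R[X] ⊗[R] M →ₗ[R[X]] Module.AEval' φ :=
    LinearMap.liftBaseChange R[X] (Module.AEval'.of φ).toLinearMap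
  let Φ : R[X] ⊗[R] M →ₗ[R[X]] R[X] ⊗[R] M := φ.baseChange R[X]
  let ι : R[X] ⊗[R] M →ₗ[R[X]] R[X] ⊗[R] M := (X : R[X]) • LinearMap.id - Φ
  have hev : ∀ (p : R[X]) (x : M), ev (p ⊗ₜ x) = p • Module.AEval'.of φ x := by
    intro p x; simp [ev]
  have hι : ∀ (p : R[X]) (x : M), ι (p ⊗ₜ x) = (X * p) ⊗ₜ x - p ⊗ₜ φ x := by
    intro p x; simp [ι, Φ, TensorProduct.smul_tmul']
  have h0 : ∀ q, ev (ι q) = 0 := by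
    intro q
    induction q using TensorProduct.induction_on with
    | zero => simp
    | add a b ha hb => rw [map_add, map_add, ha, hb, add_zero]
    | tmul p x =>
      rw [hι, map_sub, hev, hev, mul_comm, mul_smul, Module.AEval'.X_smul_of, sub_self]
  have h1 : ∀ q, q - 1 ⊗ₜ (Module.AEval'.of φ).symm (ev q) ∈ LinearMap.range ι := by
    intro q
    induction q using TensorProduct.induction_on with
    | zero => simp
    | add a b ha hb =>
      have := add_mem ha hb
      rw [map_add, map_add, TensorProduct.tmul_add]
      convert this using 1
      abel
    | tmul p x =>
      rw [hev]
      induction p using Polynomial.induction_on' generalizing x with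
      | add p q hp hq =>
        have := add_mem (hp x) (hq x)
        rw [add_smul, map_add, TensorProduct.tmul_add, TensorProduct.add_tmul]
        convert this using 1
        abel
      | monomial n a =>
        induction n generalizing x with
        | zero =>
          rw [monomial_zero_left, Module.AEval.C_smul, map_smul, LinearEquiv.symm_apply_apply,
            ← TensorProduct.smul_tmul, Polynomial.smul_eq_C_mul, mul_one, sub_self]
          exact zero_mem _
        | succ n ih =>
          have e : (monomial (n+1) a : R[X]) = X * monomial n a := by
            rw [X_mul_monomial]
          have := add_mem (LinearMap.mem_range_self ι ((monomial n a) ⊗ₜ x)) (ih (φ x))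
          rw [hι, ← Module.AEval'.X_smul_of, ← mul_smul, mul_comm (monomial n a) X, ← e] at this
          convert this using 1
          abel
  refine ⟨ev, ι, ?_, ?_, ?_⟩
  · intro y
    exact ⟨1 ⊗ₜ (Module.AEval'.of φ).symm y, by simp [hev]⟩
  · rw [injective_iff_map_eq_zero]
    intro q hq
    have hq' : (X : R[X]) • q = Φ q := by simpa [ι, sub_eq_zero] using hq
    have hk : ∀ k : ℕ, (X : R[X]) ^ k • q = (φ ^ k).baseChange R[X] q := by
      intro k
      induction k with
      | zero => simp
      | succ k ih =>
        rw [pow_succ, mul_smul, hq', ← map_smul, ih, pow_succ', LinearMap.baseChange_mul]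
        rfl
    have := hk m
    rw [hφ, LinearMap.baseChange_zero, LinearMap.zero_apply] at this
    exact (smul_eq_zero.mp this).resolve_left (pow_ne_zero _ X_ne_zero)
  · ext q
    constructor
    · intro h
      have := h1 q
      rw [LinearMap.mem_ker] at h
      simpa [h] using this
    · rintro ⟨q, rfl⟩
      exact h0 q

theorem aux_schanuel {S : Type*} [Ring S] {P Q F : Type*} [AddCommGroup P] [Module S P]
    [AddCommGroup Q] [Module S Q] [AddCommGroup F] [Module S F] [Module.Projective S P]
    [Module.Projective S Q] (p : P →ₗ[S] F) (hp : Function.Surjective p)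
    (ev : Q →ₗ[S] F) (hev : Function.Surjective ev) (ι : Q →ₗ[S] Q) (hι : Function.Injective ι)
    (hex : LinearMap.ker ev = LinearMap.range ι) : Module.Projective S (LinearMap.ker p) := by
  obtain ⟨a, ha⟩ := Module.projective_lifting_property p ev hp
  obtain ⟨b, hb⟩ := Module.projective_lifting_property ev p hev
  have ha' : ∀ q, p (a q) = ev q := fun q => LinearMap.congr_fun ha q
  have hb' : ∀ q, ev (b q) = p q := fun q => LinearMap.congr_fun hb q
  have h0 : ∀ q, ev (ι q) = 0 := fun q => by
    have : ι q ∈ LinearMap.ker ev := hex ▸ LinearMap.mem_range_self ι q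
    exact this
  let e := LinearEquiv.ofInjective ι hι
  have hbe : ∀ x : LinearMap.ker p, (b ∘ₗ (LinearMap.ker p).subtype) x ∈ LinearMap.range ι := by
    intro x
    rw [← hex, LinearMap.mem_ker]
    simp [hb']
  let s : LinearMap.ker p →ₗ[S] P × Q := LinearMap.prod (LinearMap.ker p).subtype
    (e.symm.toLinearMap ∘ₗ LinearMap.codRestrict (LinearMap.range ι)
      (b ∘ₗ (LinearMap.ker p).subtype) hbe)
  let t : P × Q →ₗ[S] LinearMap.ker p := LinearMap.codRestrict (LinearMap.ker p)
    (LinearMap.coprod (LinearMap.id - a ∘ₗ b) (a ∘ₗ ι)) (by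
      intro x
      simp [ha', hb', h0])
  refine Module.Projective.of_split s t ?_
  refine LinearMap.ext fun x => Subtype.ext ?_
  have h2 : ι (e.symm ⟨b x, hbe x⟩) = b x := congrArg Subtype.val (e.apply_symm_apply ⟨b x, hbe x⟩)
  have h3 : (s x).2 = e.symm ⟨b x, hbe x⟩ := rfl
  have h4 : (s x).1 = x := rfl
  have h5 : (t (s x) : P) = ((s x).1 - a (b (s x).1)) + a (ι (s x).2) := rfl
  change (t (s x) : P) = x
  rw [h5, h3, h4, h2, sub_add_cancel]

/-- module-theoretic shadow of direction (ii) ⇒ (i) of Kumar's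
correspondence, Theorem 2.1 of the paper.
Let `K` be a field, `n ≥ 1`, `R = K[x_0,…,x_{n-1}]` and `S = R[x_n]`.
Let `M` be a finitely generated projective `R`-module, `φ : M → M` `R`-linear with
`φ^m = 0` for some `m ≥ 1`, and `ψ : R^r → M` `R`-linear with `M = φ(M) + ψ(R^r)`.
Let `F = ^S M` (Mathlib's `Module.AEval' φ`) and let `Ψ : S^r → F` be the `S`-linear map
sending the `i`-th standard basis vector to `ψ(e_i)`.  Then `Ψ` is surjective and
`E := ker Ψ` is a finitely generated projective `S`-module; in particular there is an
exact sequence `0 → E → S^r → F → 0` of `S`-modules in which `F` is annihilated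
by `x_n^m`. -/
theorem statement6 (K : Type*) [Field K] (n : ℕ) (hn : 1 ≤ n)
    (M : Type*) [AddCommGroup M] [Module (MvPolynomial (Fin n) K) M]
    [Module.Finite (MvPolynomial (Fin n) K) M]
    [Module.Projective (MvPolynomial (Fin n) K) M]
    (m : ℕ) (hm : 1 ≤ m)
    (φ : M →ₗ[MvPolynomial (Fin n) K] M) (hφ : φ ^ m = 0)
    (r : ℕ) (ψ : (Fin r → MvPolynomial (Fin n) K) →ₗ[MvPolynomial (Fin n) K] M)
    (hsurj : LinearMap.range φ ⊔ LinearMap.range ψ = ⊤)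
    (Ψ : (Fin r → Polynomial (MvPolynomial (Fin n) K))
      →ₗ[Polynomial (MvPolynomial (Fin n) K)] Module.AEval' φ)
    (hΨ : ∀ i : Fin r, Ψ (Pi.single i 1) = Module.AEval'.of φ (ψ (Pi.single i 1))) :
    Function.Surjective Ψ ∧
      Module.Finite (Polynomial (MvPolynomial (Fin n) K)) (LinearMap.ker Ψ) ∧
      Module.Projective (Polynomial (MvPolynomial (Fin n) K)) (LinearMap.ker Ψ) ∧
      ∀ x : Module.AEval' φ,
        ((Polynomial.X : Polynomial (MvPolynomial (Fin n) K)) ^ m) • x = 0 := by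
  have key : ∀ (k : ℕ) (x : M), ∃ y, Module.AEval'.of φ (x - (φ ^ k) y) ∈ LinearMap.range Ψ := by
    have hψ : ∀ z, Module.AEval'.of φ (ψ z) ∈ LinearMap.range Ψ := by
      intro z
      rw [← Finset.univ_sum_single z, map_sum, map_sum]
      refine Submodule.sum_mem _ fun i _ => ?_
      have e : (Pi.single i (z i) : Fin r → MvPolynomial (Fin n) K)
          = z i • Pi.single i 1 := by
        rw [← Pi.single_smul, smul_eq_mul, mul_one]
      rw [e, map_smul, map_smul, ← hΨ, ← Module.AEval.C_smul]
      exact Submodule.smul_mem _ _ (LinearMap.mem_range_self _ _)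
    intro k
    induction k with
    | zero => intro x; exact ⟨x, by simp⟩
    | succ k ih =>
      intro x
      obtain ⟨y, hy⟩ := ih x
      have hy' : y ∈ LinearMap.range φ ⊔ LinearMap.range ψ := hsurj ▸ Submodule.mem_top
      obtain ⟨_, ⟨u, rfl⟩, _, ⟨z, rfl⟩, huz⟩ := Submodule.mem_sup.mp hy'
      refine ⟨u, ?_⟩
      have h2 := Submodule.smul_mem _ ((Polynomial.X : Polynomial (MvPolynomial (Fin n) K)) ^ k)
        (hψ z)
      rw [Module.AEval'.X_pow_smul_of] at h2
      have h3 := add_mem hy h2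
      rw [← map_add] at h3
      convert h3 using 2
      rw [← huz, pow_succ, map_add, Module.End.mul_apply, Module.End.smul_def]
      abel
  have hs : Function.Surjective Ψ := by
    intro x
    obtain ⟨y, hy⟩ := key m ((Module.AEval'.of φ).symm x)
    simpa [hφ] using hy
  obtain ⟨ev, ι, h1, h2, h3⟩ := aux_char_seq m φ hφ
  refine ⟨hs, inferInstance, aux_schanuel Ψ hs ev h1 ι h2 h3, ?_⟩
  intro x
  obtain ⟨y, rfl⟩ := (Module.AEval'.of φ).surjective x
  rw [Module.AEval'.X_pow_smul_of, hφ, zero_smul, map_zero]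
end
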